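/- Define p : ℕ → ℝ by p(1) = 3/4, p(2) = 1/2, and p(n+2) = (3/4) p(n+1) - (1/16) p(n). Then (1/n) * log(p(n)) converges to log((3+√5)/8) as n tends to infinity. -/

import Mathlib

theorem path_h_limit (p : ℕ → ℝ)
    (hp1 : p 1 = 3 / 4) (hp2 : p 2 = 1 / 2)
    (hrec : ∀ n, 1 ≤ n → p (n + 2) = (3 / 4) * p (n + 1) - (1 / 16) * p n) :
    Filter.Tendsto (fun n : ℕ => (1 / (n : ℝ)) * Real.log (p n)) Filter.atTop
      (nhds (Real.log ((3 + Real.sqrt 5) / 8))) := by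
  obtain ⟨s, hs⟩ : ∃ s, s = Real.sqrt 5 := ⟨_, rfl⟩
  rw [← hs]
  have hs0 : 0 ≤ s := hs ▸ Real.sqrt_nonneg 5
  have hss : s ^ 2 = 5 := by rw [hs]; exact Real.sq_sqrt (by norm_num)
  have hs2 : 2 < s := by nlinarith
  have hs3 : s < 3 := by nlinarith
  obtain ⟨l, hl⟩ : ∃ l, l = (3 + s) / 8 := ⟨_, rfl⟩
  obtain ⟨m, hm⟩ : ∃ m, m = (3 - s) / 8 := ⟨_, rfl⟩
  rw [← hl]
  have hl2 : l ^ 2 = 3 / 4 * l - 1 / 16 := by rw [hl]; linear_combination hss / 64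
  have hm2 : m ^ 2 = 3 / 4 * m - 1 / 16 := by rw [hm]; linear_combination hss / 64
  have key : ∀ n, 2 * s * p (n + 1) = (3 + s) * l ^ (n + 1) + (s - 3) * m ^ (n + 1) ∧
      2 * s * p (n + 2) = (3 + s) * l ^ (n + 2) + (s - 3) * m ^ (n + 2) := by
    intro n
    induction n with
    | zero =>
      constructor
      · simp only [zero_add, pow_one, hp1, hl, hm]; ring
      · simp only [zero_add, hl2, hm2, hp2]; rw [hl, hm]; ring
    | succ k ih =>
      obtain ⟨h1, h2⟩ := ih
      refine ⟨h2, ?_⟩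
      rw [hrec (k + 1) (by omega)]
      rw [show k + 1 + 1 = k + 2 from rfl]
      linear_combination (3 / 4) * h2 - (1 / 16) * h1 - (3 + s) * l ^ (k + 1) * hl2
        - (s - 3) * m ^ (k + 1) * hm2
  have hl0 : 0 < l := by rw [hl]; linarith
  have hm0 : 0 < m := by rw [hm]; linarith
  have hml : m ≤ l := by rw [hl, hm]; linarith
  have bd : ∀ n, 1 ≤ n → l ^ n ≤ p n ∧ p n ≤ 2 * l ^ n := by
    intro n hn
    obtain ⟨k, rfl⟩ : ∃ k, n = k + 1 := ⟨n - 1, by omega⟩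
    have h := (key k).1
    have h1 : m ^ (k + 1) ≤ l ^ (k + 1) := pow_le_pow_left₀ hm0.le hml _
    have h2 : 0 < m ^ (k + 1) := pow_pos hm0 _
    have h3 : 0 < l ^ (k + 1) := pow_pos hl0 _
    constructor
    · have : 0 ≤ 2 * s * (p (k + 1) - l ^ (k + 1)) := by nlinarith
      have := nonneg_of_mul_nonneg_right this (by linarith)
      linarith
    · have : 0 ≤ 2 * s * (2 * l ^ (k + 1) - p (k + 1)) := by nlinarith
      have := nonneg_of_mul_nonneg_right this (by linarith)
      linarith
  have hlim : Filter.Tendsto (fun n : ℕ => Real.log 2 / (n : ℝ) + Real.log l) Filter.atTop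
      (nhds (Real.log l)) := by
    simpa using (tendsto_const_div_atTop_nhds_zero_nat (Real.log 2)).add_const (Real.log l)
  refine tendsto_of_tendsto_of_tendsto_of_le_of_le' tendsto_const_nhds hlim ?_ ?_
  · filter_upwards [Filter.eventually_ge_atTop 1] with n hn
    have hn' : (0 : ℝ) < n := by exact_mod_cast hn
    have h := Real.log_le_log (pow_pos hl0 n) (bd n hn).1
    rw [Real.log_pow] at h
    rw [one_div_mul_eq_div, le_div_iff₀ hn']
    linarith
  · filter_upwards [Filter.eventually_ge_atTop 1] with n hn
    have hn' : (0 : ℝ) < n := by exact_mod_cast hn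
    have h0 := pow_pos hl0 n
    have h := Real.log_le_log (h0.trans_le (bd n hn).1) (bd n hn).2
    rw [Real.log_mul (by norm_num) h0.ne', Real.log_pow] at h
    rw [one_div_mul_eq_div, div_le_iff₀ hn', add_mul, div_mul_cancel₀ _ hn'.ne']
    linarith
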